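/- Variance estimate, off-diagonal part (Lemma 4.6, second part): fix θ with −√2 < θ < √2 and R ∈ ℕ. With x_θ^N = x/N + θ and T^N_{r,∞}(x) = { y ∈ ℝ : r/N ≤ |x_θ^N − y| }, one has lim_{r→∞} limsup_{N→∞} sup_{|x| < R} ∬_{T^N_{r,∞}(x) × T^N_{r,∞}(x)} L^N(y,z)² / ( |x_θ^N − y| · |x_θ^N − z| ) dy dz = 0. -/

import Mathlib

open Real MeasureTheory Filter Set

/-- Physicists' Hermite polynomial `H_n(x) = (-1)^n e^{x^2} (d/dx)^n e^{-x^2}`. -/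
noncomputable def hermiteP (n : ℕ) (x : ℝ) : ℝ :=
  (-1 : ℝ) ^ n * Real.exp (x ^ 2) * iteratedDeriv n (fun t => Real.exp (-t ^ 2)) x

/-- Oscillator wave function `ψ_n(x) = (√π 2^n n!)^{-1/2} e^{-x^2/2} H_n(x)`. -/
noncomputable def osc (n : ℕ) (x : ℝ) : ℝ :=
  (Real.sqrt (Real.sqrt Real.pi * 2 ^ n * (n.factorial : ℝ)))⁻¹ *
    Real.exp (-x ^ 2 / 2) * hermiteP n x

/-- The kernel `K^N(x,y) = Σ_{k=0}^{N-1} ψ_k(x) ψ_k(y)`. -/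
noncomputable def kerK (N : ℕ) (x y : ℝ) : ℝ :=
  ∑ k ∈ Finset.range N, osc k x * osc k y

/-- The rescaled kernel `L^N(x,y) = N^{-1/2} K^N(√N x, √N y)`. -/
noncomputable def kerL (N : ℕ) (x y : ℝ) : ℝ :=
  (Real.sqrt (N : ℝ))⁻¹ * kerK N (Real.sqrt (N : ℝ) * x) (Real.sqrt (N : ℝ) * y)

/-- Hermite polynomials as polynomials. -/
noncomputable def hpoly : ℕ → Polynomial ℝ
  | 0 => 1
  | n + 1 => 2 * Polynomial.X * hpoly n - Polynomial.derivative (hpoly n)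

lemma hpoly_succ (n : ℕ) :
    hpoly (n + 1) = 2 * Polynomial.X * hpoly n - Polynomial.derivative (hpoly n) := rfl

lemma hpoly_deriv (n : ℕ) :
    Polynomial.derivative (hpoly (n + 1)) = 2 * ((n : Polynomial ℝ) + 1) * hpoly n := by
  induction n with
  | zero => simp [hpoly]
  | succ n ih =>
    rw [hpoly_succ (n + 1), Polynomial.derivative_sub, Polynomial.derivative_mul, ih]
    simp only [Polynomial.derivative_mul, Polynomial.derivative_X, Polynomial.derivative_add,
      Polynomial.derivative_natCast, Polynomial.derivative_one, Polynomial.derivative_ofNat]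
    rw [hpoly_succ n]
    push_cast
    ring

lemma hasDerivAt_poly_gauss (p : Polynomial ℝ) (x : ℝ) :
    HasDerivAt (fun t => p.eval t * Real.exp (-t ^ 2))
      ((Polynomial.derivative p - 2 * Polynomial.X * p).eval x * Real.exp (-x ^ 2)) x := by
  have h1 := p.hasDerivAt x
  have h2 : HasDerivAt (fun t : ℝ => Real.exp (-t ^ 2)) (Real.exp (-x ^ 2) * (-(2 * x))) x := by
    have := ((hasDerivAt_pow 2 x).neg).exp
    simpa using this
  refine (h1.fun_mul h2).congr_deriv ?_
  simp
  ring

lemma hermiteP_eq (n : ℕ) (x : ℝ) : hermiteP n x = (hpoly n).eval x := by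
  have key : ∀ n : ℕ, iteratedDeriv n (fun t : ℝ => Real.exp (-t ^ 2)) =
      fun t => (((-1 : ℝ) ^ n) * (hpoly n).eval t) * Real.exp (-t ^ 2) := by
    intro n
    induction n with
    | zero => funext t; simp [hpoly]
    | succ n ih =>
      rw [iteratedDeriv_succ, ih]
      funext t
      have := (hasDerivAt_poly_gauss (Polynomial.C ((-1 : ℝ) ^ n) * hpoly n) t).deriv
      simp only [Polynomial.eval_mul, Polynomial.eval_C] at this
      rw [this, hpoly_succ, Polynomial.derivative_C_mul]
      simp only [Polynomial.eval_sub, Polynomial.eval_mul, Polynomial.eval_C,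
        Polynomial.eval_X, Polynomial.eval_ofNat]
      ring
  unfold hermiteP
  rw [key]
  have h1 : ((-1 : ℝ) ^ n) * (-1) ^ n = 1 := by rw [← mul_pow]; simp
  have h2 : Real.exp (x ^ 2) * Real.exp (-x ^ 2) = 1 := by rw [← Real.exp_add]; simp
  calc _ = (((-1 : ℝ) ^ n) * (-1) ^ n) * (Real.exp (x ^ 2) * Real.exp (-x ^ 2)) * (hpoly n).eval x := by ring
    _ = _ := by rw [h1, h2]; ring

lemma integrable_poly_gauss (p : Polynomial ℝ) :
    Integrable (fun t => p.eval t * Real.exp (-t ^ 2)) := by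
  induction p using Polynomial.induction_on' with
  | add p q hp hq =>
    simp only [Polynomial.eval_add, add_mul]
    exact hp.add hq
  | monomial n a =>
    have h := integrable_rpow_mul_exp_neg_mul_sq (b := 1) one_pos (s := (n : ℝ))
      (by have := Nat.cast_nonneg (α := ℝ) n; linarith)
    have := h.const_mul a
    simpa [mul_assoc] using this

lemma int_deriv_zero (p : Polynomial ℝ) :
    ∫ t, (Polynomial.derivative p - 2 * Polynomial.X * p).eval t * Real.exp (-t ^ 2) = 0 :=
  integral_eq_zero_of_hasDerivAt_of_integrable (hasDerivAt_poly_gauss p)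
    (integrable_poly_gauss _) (integrable_poly_gauss _)

lemma int_rec (p : Polynomial ℝ) (n : ℕ) :
    ∫ t, (p * hpoly (n + 1)).eval t * Real.exp (-t ^ 2) =
      ∫ t, (Polynomial.derivative p * hpoly n).eval t * Real.exp (-t ^ 2) := by
  have h := int_deriv_zero (p * hpoly n)
  rw [← sub_eq_zero, ← integral_sub (integrable_poly_gauss _) (integrable_poly_gauss _),
    ← neg_eq_zero, ← integral_neg, ← h]
  congr 1
  funext t
  rw [hpoly_succ]
  simp
  ring

lemma int_orth (n : ℕ) : ∀ m : ℕ, ∫ t, (hpoly m * hpoly n).eval t * Real.exp (-t ^ 2) =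
    if m = n then Real.sqrt Real.pi * 2 ^ n * (n.factorial : ℝ) else 0 := by
  induction n with
  | zero =>
    intro m
    cases m with
    | zero =>
      have := integral_gaussian 1
      simpa [hpoly] using this
    | succ m =>
      rw [mul_comm, int_rec]
      simp [hpoly]
  | succ n ih =>
    intro m
    rw [int_rec]
    cases m with
    | zero => simp [hpoly]
    | succ m =>
      rw [hpoly_deriv]
      have : ∀ t : ℝ, (2 * ((m : Polynomial ℝ) + 1) * hpoly m * hpoly n).eval t
          * Real.exp (-t ^ 2) = (2 * ((m : ℝ) + 1)) * ((hpoly m * hpoly n).eval t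
          * Real.exp (-t ^ 2)) := by
        intro t; simp; ring
      simp_rw [this]
      rw [integral_const_mul, ih]
      by_cases h : m = n
      · subst h
        simp only [if_true, Nat.factorial_succ]
        push_cast
        ring
      · simp [h]

/-- The normalisation constant. -/
noncomputable def hnorm (n : ℕ) : ℝ := Real.sqrt Real.pi * 2 ^ n * (n.factorial : ℝ)

lemma hnorm_pos (n : ℕ) : 0 < hnorm n := by
  unfold hnorm
  have := Real.pi_pos
  positivity

lemma hnorm_succ (n : ℕ) : hnorm (n + 1) = 2 * ((n : ℝ) + 1) * hnorm n := by
  unfold hnorm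
  rw [Nat.factorial_succ]
  push_cast
  ring

lemma osc_mul (j k : ℕ) (x : ℝ) : osc j x * osc k x =
    ((Real.sqrt (hnorm j))⁻¹ * (Real.sqrt (hnorm k))⁻¹) *
      ((hpoly j * hpoly k).eval x * Real.exp (-x ^ 2)) := by
  have h : Real.exp (-x ^ 2) = Real.exp (-x ^ 2 / 2) * Real.exp (-x ^ 2 / 2) := by
    rw [← Real.exp_add]; ring_nf
  unfold osc
  rw [hermiteP_eq, hermiteP_eq, h, Polynomial.eval_mul]
  unfold hnorm
  ring

lemma osc_integrable (j k : ℕ) : Integrable (fun x => osc j x * osc k x) := by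
  simp_rw [osc_mul]
  exact (integrable_poly_gauss _).const_mul _

lemma osc_orth (j k : ℕ) : ∫ x, osc j x * osc k x = if j = k then 1 else 0 := by
  simp_rw [osc_mul]
  rw [integral_const_mul, int_orth]
  split_ifs with h
  · subst h
    change _ * hnorm j = 1
    rw [← mul_inv, Real.mul_self_sqrt (hnorm_pos j).le, inv_mul_cancel₀ (hnorm_pos j).ne']
  · simp

lemma osc_continuous (k : ℕ) : Continuous (osc k) := by
  have : osc k = fun x => (Real.sqrt (hnorm k))⁻¹ * Real.exp (-x ^ 2 / 2) * (hpoly k).eval x := by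
    funext x
    unfold osc
    rw [hermiteP_eq]
    rfl
  rw [this]
  fun_prop

lemma kerK_symm (N : ℕ) (x y : ℝ) : kerK N x y = kerK N y x := by
  unfold kerK
  exact Finset.sum_congr rfl fun k _ => mul_comm _ _

lemma kerK_sq (N : ℕ) (a w : ℝ) : kerK N a w ^ 2 =
    ∑ j ∈ Finset.range N, ∑ k ∈ Finset.range N, (osc j a * osc k a) * (osc j w * osc k w) := by
  unfold kerK
  rw [sq, Finset.sum_mul_sum]
  exact Finset.sum_congr rfl fun j _ => Finset.sum_congr rfl fun k _ => by ring

lemma kerK_sq_integrable (N : ℕ) (a : ℝ) : Integrable (fun w => kerK N a w ^ 2) := by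
  simp_rw [kerK_sq]
  exact integrable_finsetSum _ fun j _ => integrable_finsetSum _ fun k _ =>
    (osc_integrable j k).const_mul _

lemma kerK_repr (N : ℕ) (a : ℝ) : ∫ w, kerK N a w ^ 2 = kerK N a a := by
  simp_rw [kerK_sq]
  rw [integral_finsetSum _ fun j _ => integrable_finsetSum _ fun k _ =>
    (osc_integrable j k).const_mul _]
  unfold kerK
  refine Finset.sum_congr rfl fun j hj => ?_
  rw [integral_finsetSum _ fun k _ => (osc_integrable j k).const_mul _]
  simp_rw [integral_const_mul, osc_orth]
  simp only [mul_ite, mul_one, mul_zero]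
  rw [Finset.sum_ite_eq, if_pos hj]

lemma kerK_diag (N : ℕ) (x : ℝ) : kerK N x x =
    (∑ k ∈ Finset.range N, Polynomial.C (hnorm k)⁻¹ * (hpoly k * hpoly k)).eval x
      * Real.exp (-x ^ 2) := by
  unfold kerK
  rw [Polynomial.eval_finsetSum, Finset.sum_mul]
  refine Finset.sum_congr rfl fun k _ => ?_
  rw [osc_mul, ← mul_inv, Real.mul_self_sqrt (hnorm_pos k).le]
  simp
  ring

lemma kerK_poly_deriv (N : ℕ) :
    let p := ∑ k ∈ Finset.range (N + 1), Polynomial.C (hnorm k)⁻¹ * (hpoly k * hpoly k)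
    Polynomial.derivative p - 2 * Polynomial.X * p =
      - (Polynomial.C (hnorm N)⁻¹ * (hpoly N * hpoly (N + 1))) := by
  intro p
  simp only [p]
  induction N with
  | zero => simp [hpoly]; ring
  | succ N ih =>
    rw [Finset.sum_range_succ, Polynomial.derivative_add, mul_add, add_sub_add_comm, ih]
    have h1 : Polynomial.C (hnorm N)⁻¹ = 2 * ((N : Polynomial ℝ) + 1) *
        Polynomial.C (hnorm (N + 1))⁻¹ := by
      have : (hnorm N)⁻¹ = 2 * ((N : ℝ) + 1) * (hnorm (N + 1))⁻¹ := by
        have := hnorm_pos N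
        rw [hnorm_succ]
        field_simp
      rw [this, Polynomial.C_mul, Polynomial.C_mul, Polynomial.C_add, Polynomial.C_1,
        Polynomial.C_eq_natCast]
      rfl
    rw [h1, hpoly_succ (N + 1)]
    simp only [Polynomial.derivative_mul, Polynomial.derivative_C, hpoly_deriv]
    ring

lemma osc_prod_int (N : ℕ) :
    ∫ t, |(hnorm N)⁻¹ * ((hpoly N * hpoly (N + 1)).eval t * Real.exp (-t ^ 2))|
      ≤ Real.sqrt (2 * ((N : ℝ) + 1)) := by
  set s := Real.sqrt (2 * ((N : ℝ) + 1)) with hs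
  have hs0 : 0 < s := by rw [hs]; positivity
  have hs2 : s ^ 2 = 2 * ((N : ℝ) + 1) := Real.sq_sqrt (by positivity)
  have hN := hnorm_pos N
  have hi1 := (integrable_poly_gauss (hpoly N * hpoly N)).const_mul ((hnorm N)⁻¹ * (s / 2))
  have hi2 := (integrable_poly_gauss (hpoly (N + 1) * hpoly (N + 1))).const_mul
    ((hnorm N)⁻¹ * (1 / (2 * s)))
  have hle : ∫ t, |(hnorm N)⁻¹ * ((hpoly N * hpoly (N + 1)).eval t * Real.exp (-t ^ 2))| ≤
      ∫ t, ((hnorm N)⁻¹ * (s / 2) * ((hpoly N * hpoly N).eval t * Real.exp (-t ^ 2)) +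
        (hnorm N)⁻¹ * (1 / (2 * s)) *
          ((hpoly (N + 1) * hpoly (N + 1)).eval t * Real.exp (-t ^ 2))) := by
    refine integral_mono ((integrable_poly_gauss _).const_mul _).abs (hi1.add hi2) fun t => ?_
    simp only [Polynomial.eval_mul]
    rw [abs_mul, abs_mul, abs_of_pos (inv_pos.2 hN), abs_of_pos (Real.exp_pos _)]
    set a := (hpoly N).eval t
    set b := (hpoly (N + 1)).eval t
    have hab : |a * b| ≤ s / 2 * (a * a) + 1 / (2 * s) * (b * b) := by
      have h1 : s / 2 * (a * a) + 1 / (2 * s) * (b * b) - |a * b|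
          = (s * |a| - |b|) ^ 2 / (2 * s) := by
        rw [abs_mul, ← abs_mul_abs_self a, ← abs_mul_abs_self b]
        field_simp
        ring
      have h2 : 0 ≤ (s * |a| - |b|) ^ 2 / (2 * s) := by positivity
      linarith
    calc _ = ((hnorm N)⁻¹ * Real.exp (-t ^ 2)) * |a * b| := by ring
      _ ≤ ((hnorm N)⁻¹ * Real.exp (-t ^ 2)) * (s / 2 * (a * a) + 1 / (2 * s) * (b * b)) := by
        gcongr
      _ = _ := by ring
  refine hle.trans (le_of_eq ?_)
  rw [integral_add hi1 hi2, integral_const_mul, integral_const_mul, int_orth, int_orth]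
  simp only [if_true]
  change _ * hnorm N + _ * hnorm (N + 1) = s
  rw [hnorm_succ, ← hs2]
  field_simp
  ring

lemma kerK_bound (N : ℕ) (x : ℝ) : kerK (N + 1) x x ≤ Real.sqrt (2 * ((N : ℝ) + 1)) := by
  have hd : ∀ t : ℝ, HasDerivAt (fun t => kerK (N + 1) t t)
      (-((hnorm N)⁻¹ * ((hpoly N * hpoly (N + 1)).eval t * Real.exp (-t ^ 2)))) t := by
    intro t
    simp_rw [kerK_diag]
    convert hasDerivAt_poly_gauss _ t using 1
    rw [kerK_poly_deriv N]
    simp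
    ring
  have hi : Integrable (fun t => kerK (N + 1) t t) := by
    simp_rw [kerK_diag]
    exact integrable_poly_gauss _
  have hi' : Integrable (fun t : ℝ =>
      -((hnorm N)⁻¹ * ((hpoly N * hpoly (N + 1)).eval t * Real.exp (-t ^ 2)))) :=
    ((integrable_poly_gauss _).const_mul _).neg
  have ht := tendsto_zero_of_hasDerivAt_of_integrableOn_Ioi (a := x) (fun t _ => hd t)
    hi'.integrableOn hi.integrableOn
  have := integral_Ioi_of_hasDerivAt_of_tendsto' (a := x) (fun t _ => hd t)
    hi'.integrableOn ht
  rw [integral_neg] at this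
  have h3 : kerK (N + 1) x x =
    ∫ t in Ioi x, (hnorm N)⁻¹ * ((hpoly N * hpoly (N + 1)).eval t * Real.exp (-t ^ 2)) := by
    linarith
  rw [h3]
  refine le_trans ?_ (osc_prod_int N)
  refine (le_abs_self _).trans ((abs_integral_le_integral_abs).trans ?_)
  exact setIntegral_le_integral ((integrable_poly_gauss _).const_mul _).abs
    (Eventually.of_forall fun t => abs_nonneg _)

lemma kerL_int (N : ℕ) (hN : 1 ≤ N) (y : ℝ) :
    ∫⁻ z, ENNReal.ofReal (kerL N y z ^ 2) ≤ ENNReal.ofReal (Real.sqrt 2 / N) := by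
  have hN0 : (0 : ℝ) < N := by exact_mod_cast hN
  have hs : 0 < Real.sqrt (N : ℝ) := Real.sqrt_pos.2 hN0
  have hi : Integrable (fun z => kerL N y z ^ 2) := by
    unfold kerL
    simp_rw [mul_pow]
    exact ((kerK_sq_integrable N (√N * y)).comp_mul_left' hs.ne').const_mul _
  rw [← ofReal_integral_eq_lintegral_ofReal hi (Eventually.of_forall fun z => sq_nonneg _)]
  refine ENNReal.ofReal_le_ofReal ?_
  unfold kerL
  simp_rw [mul_pow]
  rw [integral_const_mul, Measure.integral_comp_mul_left (fun w => kerK N (√N * y) w ^ 2), kerK_repr]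
  have hb : kerK N (√N * y) (√N * y) ≤ √2 * √N := by
    obtain ⟨M, rfl⟩ : ∃ M, N = M + 1 := ⟨N - 1, by omega⟩
    have := kerK_bound M (√((M + 1 : ℕ) : ℝ) * y)
    rw [← Real.sqrt_mul (by norm_num)]
    push_cast at this ⊢
    exact this
  rw [abs_of_pos (inv_pos.2 hs), smul_eq_mul]
  have h2 : √(N : ℝ) ^ 2 = N := Real.sq_sqrt hN0.le
  calc _ ≤ (√(N : ℝ))⁻¹ ^ 2 * ((√(N : ℝ))⁻¹ * (√2 * √N)) := by gcongr
    _ = √2 / (√(N : ℝ) ^ 2) := by field_simp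
    _ = _ := by rw [h2]

lemma tail_int (δ : ℝ) (hδ : 0 < δ) (c : ℝ) :
    ∫⁻ y in {y : ℝ | δ ≤ |c - y|}, ENNReal.ofReal (((c - y) ^ 2)⁻¹) ≤ ENNReal.ofReal (2 / δ) := by
  have hIoi : ∫⁻ u in Ioi δ, ENNReal.ofReal ((u ^ 2)⁻¹) = ENNReal.ofReal (1 / δ) := by
    have e : ∀ u : ℝ, (u ^ 2)⁻¹ = u ^ (-2 : ℝ) := fun u => by
      rw [show (-2 : ℝ) = ((-2 : ℤ) : ℝ) by norm_num, Real.rpow_intCast]; rfl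
    simp_rw [e]
    have hi := integrableOn_Ioi_rpow_of_lt (a := -2) (by norm_num) hδ
    rw [← ofReal_integral_eq_lintegral_ofReal hi, integral_Ioi_rpow_of_lt (by norm_num) hδ]
    · congr 1
      rw [show (-2 + 1 : ℝ) = -1 by norm_num, Real.rpow_neg_one]
      simp
    · filter_upwards [ae_restrict_mem measurableSet_Ioi] with u hu
      exact Real.rpow_nonneg (hδ.trans hu).le _
  have h0 : ∫⁻ u in Ici δ, ENNReal.ofReal ((u ^ 2)⁻¹) = ENNReal.ofReal (1 / δ) := by
    rw [← hIoi]; exact setLIntegral_congr Ioi_ae_eq_Ici.symm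
  have hm : MeasurableSet {u : ℝ | δ ≤ |u|} := measurableSet_le measurable_const measurable_abs
  have hm' : MeasurableSet {y : ℝ | δ ≤ |c - y|} :=
    measurableSet_le measurable_const (by fun_prop)
  have hshift : ∫⁻ y in {y : ℝ | δ ≤ |c - y|}, ENNReal.ofReal (((c - y) ^ 2)⁻¹) =
      ∫⁻ u in {u : ℝ | δ ≤ |u|}, ENNReal.ofReal ((u ^ 2)⁻¹) := by
    rw [← lintegral_indicator hm, ← lintegral_indicator hm',
      ← lintegral_sub_left_eq_self (indicator {u : ℝ | δ ≤ |u|} _) c]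
    rfl
  have hneg : ∫⁻ u in Iic (-δ), ENNReal.ofReal ((u ^ 2)⁻¹) = ENNReal.ofReal (1 / δ) := by
    rw [← h0, ← lintegral_indicator measurableSet_Iic, ← lintegral_indicator measurableSet_Ici,
      ← lintegral_sub_left_eq_self _ 0]
    congr 1
    funext u
    by_cases h : δ ≤ u
    · rw [indicator_of_mem (by simpa using h), indicator_of_mem (by simpa using h)]; simp
    · rw [indicator_of_notMem (by simpa using h), indicator_of_notMem (by simpa using h)]
  rw [hshift]
  have hset : {u : ℝ | δ ≤ |u|} ⊆ Ici δ ∪ Iic (-δ) := by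
    intro u hu
    rcases le_abs.1 (show δ ≤ |u| from hu) with h | h
    · exact Or.inl h
    · exact Or.inr (by simp; linarith)
  refine (lintegral_mono_set hset).trans ((lintegral_union_le _ _ _).trans ?_)
  rw [h0, hneg, ← ENNReal.ofReal_add (by positivity) (by positivity)]
  apply le_of_eq
  congr 1
  ring

lemma kerL_symm (N : ℕ) (x y : ℝ) : kerL N x y = kerL N y x := by
  unfold kerL
  rw [kerK_symm]

lemma kerL_cont (N : ℕ) : Continuous (fun p : ℝ × ℝ => kerL N p.1 p.2) := by
  unfold kerL kerK
  refine continuous_const.mul (continuous_finsetSum _ fun k _ => ?_)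
  exact ((osc_continuous k).comp (by fun_prop)).mul ((osc_continuous k).comp (by fun_prop))

lemma enorm_iter_le (S : Set ℝ) (F : ℝ → ℝ → ℝ) :
    ‖∫ y in S, ∫ z in S, F y z‖ₑ ≤ ∫⁻ y in S, ∫⁻ z in S, ‖F y z‖ₑ := by
  refine (enorm_integral_le_lintegral_enorm _).trans (lintegral_mono fun y => ?_)
  exact enorm_integral_le_lintegral_enorm (fun z => F y z)

lemma sym_bound (S : Set ℝ) (a : ℝ → ENNReal) (k : ℝ → ℝ → ENNReal) (ham : Measurable a)
    (hkm : Measurable (Function.uncurry k)) (hsym : ∀ y z, k y z = k z y) (A : ENNReal)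
    (hA : ∀ y, ∫⁻ z, k y z ≤ A) :
    ∫⁻ y in S, ∫⁻ z in S, (2⁻¹ * (a y * k y z) + 2⁻¹ * (a z * k y z)) ≤
      (∫⁻ y in S, a y) * A := by
  have m1 : Measurable (Function.uncurry fun y z => a y * k y z) :=
    (ham.comp measurable_fst).mul hkm
  have m2 : Measurable (Function.uncurry fun y z => a z * k y z) :=
    (ham.comp measurable_snd).mul hkm
  have hB : ∫⁻ y in S, ∫⁻ z in S, a z * k y z = ∫⁻ y in S, ∫⁻ z in S, a y * k y z := by
    rw [lintegral_lintegral_swap m2.aemeasurable]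
    refine lintegral_congr fun y => lintegral_congr fun z => ?_
    rw [hsym z y]
  have hle : ∫⁻ y in S, ∫⁻ z in S, a y * k y z ≤ (∫⁻ y in S, a y) * A := by
    rw [← lintegral_mul_const _ ham]
    refine lintegral_mono fun y => ?_
    have m : Measurable (k y) := hkm.comp measurable_prodMk_left
    change ∫⁻ z in S, a y * k y z ≤ a y * A
    rw [lintegral_const_mul _ m]
    gcongr
    exact (setLIntegral_le_lintegral _ _).trans (hA y)
  refine le_trans (le_of_eq ?_) hle
  calc _ = 2⁻¹ * (∫⁻ y in S, ∫⁻ z in S, a y * k y z) +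
          2⁻¹ * (∫⁻ y in S, ∫⁻ z in S, a z * k y z) := by
          rw [← lintegral_const_mul _ m1.lintegral_prod_right,
            ← lintegral_const_mul _ m2.lintegral_prod_right,
            ← lintegral_add_left (m1.lintegral_prod_right.const_mul _)]
          refine lintegral_congr fun y => ?_
          have m1' : Measurable fun z => a y * k y z := m1.comp measurable_prodMk_left
          have m2' : Measurable fun z => a z * k y z := m2.comp measurable_prodMk_left
          rw [lintegral_add_left (m1'.const_mul _), lintegral_const_mul _ m1',
            lintegral_const_mul _ m2']
    _ = _ := by rw [hB, ← add_mul, ENNReal.inv_two_add_inv_two, one_mul]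

lemma pt_bound (L u v : ℝ) : ‖L ^ 2 / (|u| * |v|)‖ₑ ≤
    2⁻¹ * (ENNReal.ofReal ((u ^ 2)⁻¹) * ENNReal.ofReal (L ^ 2)) +
      2⁻¹ * (ENNReal.ofReal ((v ^ 2)⁻¹) * ENNReal.ofReal (L ^ 2)) := by
  rw [Real.enorm_eq_ofReal (by positivity)]
  have h2 : (2⁻¹ : ENNReal) = ENNReal.ofReal (2⁻¹) := by
    rw [ENNReal.ofReal_inv_of_pos (by norm_num)]; simp
  rw [h2, ← ENNReal.ofReal_mul (by positivity), ← ENNReal.ofReal_mul (by positivity),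
    ← ENNReal.ofReal_mul (by positivity), ← ENNReal.ofReal_mul (by positivity),
    ← ENNReal.ofReal_add (by positivity) (by positivity)]
  refine ENNReal.ofReal_le_ofReal ?_
  rw [div_eq_mul_inv, mul_inv, ← sq_abs u, ← sq_abs v, ← inv_pow, ← inv_pow]
  nlinarith [mul_nonneg (sq_nonneg L) (sq_nonneg (|u|⁻¹ - |v|⁻¹))]

lemma main_bound (N : ℕ) (hN : 1 ≤ N) (δ : ℝ) (hδ : 0 < δ) (c : ℝ) :
    (∫ y in {y : ℝ | δ ≤ |c - y|}, ∫ z in {z : ℝ | δ ≤ |c - z|},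
      kerL N y z ^ 2 / (|c - y| * |c - z|)) ≤ Real.sqrt 2 / N * (2 / δ) := by
  have hkm : Measurable (Function.uncurry fun y z => ENNReal.ofReal (kerL N y z ^ 2)) :=
    (((kerL_cont N).pow 2).measurable).ennreal_ofReal
  have ham : Measurable (fun y : ℝ => ENNReal.ofReal (((c - y) ^ 2)⁻¹)) := by fun_prop
  have h1 := enorm_iter_le {y : ℝ | δ ≤ |c - y|}
    (fun y z => kerL N y z ^ 2 / (|c - y| * |c - z|))
  have h2 := sym_bound {y : ℝ | δ ≤ |c - y|} _ _ ham hkm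
    (fun y z => by rw [kerL_symm N y z]) _ (kerL_int N hN)
  have h3 := lintegral_mono (μ := volume.restrict {y : ℝ | δ ≤ |c - y|}) fun y =>
    lintegral_mono (μ := volume.restrict {y : ℝ | δ ≤ |c - y|}) fun z =>
      pt_bound (kerL N y z) (c - y) (c - z)
  have h4 : (∫⁻ y in {y : ℝ | δ ≤ |c - y|}, ENNReal.ofReal (((c - y) ^ 2)⁻¹)) *
      ENNReal.ofReal (√2 / N) ≤ ENNReal.ofReal (√2 / N * (2 / δ)) := by
    rw [mul_comm, ENNReal.ofReal_mul (by positivity)]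
    gcongr
    exact tail_int δ hδ c
  exact (ENNReal.ofReal_le_ofReal_iff (by positivity)).1
    ((Real.ofReal_le_enorm _).trans (h1.trans (h3.trans (h2.trans h4))))

/-- Variance estimate, off-diagonal part (Lemma 4.6, second part). -/
theorem variance_offdiagonal (θ : ℝ) (hθ1 : -Real.sqrt 2 < θ) (hθ2 : θ < Real.sqrt 2)
    (R : ℕ) (hR : 1 ≤ R) :
    ∀ ε : ℝ, 0 < ε → ∃ r0 : ℝ, ∀ r : ℝ, r0 ≤ r → ∃ N0 : ℕ, ∀ N : ℕ, N0 ≤ N →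
      ∀ x : ℝ, |x| < (R : ℝ) →
      (∫ y in {y : ℝ | r / (N : ℝ) ≤ |x / (N : ℝ) + θ - y|},
        ∫ z in {z : ℝ | r / (N : ℝ) ≤ |x / (N : ℝ) + θ - z|},
          kerL N y z ^ 2 /
            (|x / (N : ℝ) + θ - y| * |x / (N : ℝ) + θ - z|)) < ε := by
  intro ε hε
  refine ⟨4 / ε, fun r hr => ⟨1, fun N hN x _ => ?_⟩⟩
  have hr0 : 0 < r := lt_of_lt_of_le (by positivity) hr
  have hN0 : (0 : ℝ) < N := by exact_mod_cast hN
  refine (main_bound N hN (r / N) (by positivity) (x / N + θ)).trans_lt ?_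
  have h1 : √2 / N * (2 / (r / N)) = 2 * √2 / r := by field_simp
  rw [h1, div_lt_iff₀ hr0]
  have h2 : 4 ≤ r * ε := (div_le_iff₀ hε).1 hr
  have h3 : √2 < 2 := by
    rw [Real.sqrt_lt' (by norm_num)]; norm_num
  nlinarith
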